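/- Let n, d₁, d₂ ≥ 1, M₁ ∈ ℝ, and M₂ > −d₂. Let a : ℝⁿ × ℝ^{d₁} × ℝ^{d₂} → ℂ be smooth and satisfy, for all multi-indices α, β, γ, |∂_x^γ ∂_{ξ′}^α ∂_{ξ″}^β a(x,ξ′,ξ″)| ≤ C_{α,β,γ} ⟨(ξ′,ξ″)⟩^{M₁−|α|} ⟨ξ″⟩^{M₂−|β|} for all arguments, where ⟨·⟩ := (1+|·|²)^{1/2}, and let ψ ∈ C_c^∞(ℝ^{d₂}). Define b(x,ξ′) := ∫_{ℝ^{d₂}} a(x,ξ′,ξ″) ψ(⟨ξ′⟩^{−1/2} ξ″) dξ″. Then for all multi-indices α, γ there is C′ with |∂_x^γ ∂_{ξ′}^α b(x,ξ′)| ≤ C′ ⟨ξ′⟩^{M₁ + (M₂+d₂)/2 − |α|/2} for all (x,ξ′). -/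

import Mathlib

open MeasureTheory

/-- The Japanese bracket `⟨v⟩ = (1 + |v|²)^{1/2}`. -/
noncomputable def jap {d : ℕ} (v : EuclideanSpace ℝ (Fin d)) : ℝ :=
  Real.sqrt (1 + ‖v‖ ^ 2)

/-- The Japanese bracket of a pair. -/
noncomputable def jap2 {d e : ℕ} (u : EuclideanSpace ℝ (Fin d))
    (v : EuclideanSpace ℝ (Fin e)) : ℝ :=
  Real.sqrt (1 + ‖u‖ ^ 2 + ‖v‖ ^ 2)

/-!
Mixed partial derivatives commute, so the `x`-derivatives of `b` may be taken first; they pass under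
the integral sign and fall on `a` alone. It remains to bound `∂_ξ^α ∫ ψ(⟨ξ⟩^{-θ} y) f(ξ, y) dy` for
`θ = 1/2` and fixed `x`. The cutoff and its `ξ`-derivatives live on `‖y‖ ≲ ⟨ξ⟩^θ`, where `⟨(ξ, y)⟩`
is comparable to `⟨ξ⟩`; there a derivative gains a factor `⟨ξ⟩⁻¹` whether it falls on `f` or on the
cutoff, because `‖y‖ ∂_ξ^i ⟨ξ⟩^{-θ} = O(⟨ξ⟩^{-i})`. What is left is the integral
`∫_{‖y‖ ≤ R ⟨ξ⟩^θ} ⟨y⟩^{M₂} dy = O(⟨ξ⟩^{θ (M₂ + d₂)})`: after rescaling `y` by `⟨ξ⟩^θ ≥ 1` its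
integrand is dominated by `⟨y⟩^{M₂}` if `M₂ ≥ 0`, and otherwise by `‖y‖^{M₂}`, which is integrable
near `0` as `M₂ > -d₂`. Each `ξ`-derivative thus gains `⟨ξ⟩⁻¹`, more than the `⟨ξ⟩^{-1/2}` of
type `(1/2, 1/2)`.
-/

open Filter
open scoped ContDiff Topology

section PartialDerivatives

variable {E E' G F F' : Type*} [NormedAddCommGroup E] [NormedSpace ℝ E]
  [NormedAddCommGroup E'] [NormedSpace ℝ E'] [NormedAddCommGroup G] [NormedSpace ℝ G]
  [NormedAddCommGroup F] [NormedSpace ℝ F] [NormedAddCommGroup F'] [NormedSpace ℝ F']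

lemma contDiff_fderiv_snd {f : E → G → F} (hf : ContDiff ℝ ∞ (Function.uncurry f)) :
    ContDiff ℝ ∞ (Function.uncurry fun x y => fderiv ℝ (f x) y) := by
  have h_param : ContDiff ℝ ∞ (Function.uncurry fun (p : E × G) y => f p.1 y) :=
    hf.comp ((contDiff_fst.comp contDiff_fst).prodMk contDiff_snd)
  exact h_param.fderiv (n := ∞) contDiff_snd (by simp)

lemma contDiff_iteratedFDeriv_snd {f : E → G → F} (hf : ContDiff ℝ ∞ (Function.uncurry f))
    (k : ℕ) : ContDiff ℝ ∞ (Function.uncurry fun x y => iteratedFDeriv ℝ k (f x) y) := by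
  induction k with
  | zero => exact (continuousMultilinearCurryFin0 ℝ G F).symm.contDiff.comp hf
  | succ k ih =>
    exact (continuousMultilinearCurryLeftEquiv ℝ (fun _ : Fin (k + 1) => G) F).symm.contDiff.comp
      (contDiff_fderiv_snd ih)

lemma contDiff_uncurry_swap {f : E → G → F} (hf : ContDiff ℝ ∞ (Function.uncurry f)) :
    ContDiff ℝ ∞ (Function.uncurry fun y x => f x y) :=
  hf.comp (contDiff_snd.prodMk contDiff_fst)

lemma contDiff_fderiv_fst {f : E → G → F} (hf : ContDiff ℝ ∞ (Function.uncurry f)) :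
    ContDiff ℝ ∞ (Function.uncurry fun x y => fderiv ℝ (f · y) x) :=
  contDiff_uncurry_swap (contDiff_fderiv_snd (contDiff_uncurry_swap hf))

lemma contDiff_iteratedFDeriv_fst {f : E → G → F} (hf : ContDiff ℝ ∞ (Function.uncurry f))
    (k : ℕ) : ContDiff ℝ ∞ (Function.uncurry fun x y => iteratedFDeriv ℝ k (f · y) x) :=
  contDiff_uncurry_swap (contDiff_iteratedFDeriv_snd (contDiff_uncurry_swap hf) k)

lemma contDiff_fst_of_uncurry {f : E → G → F} (hf : ContDiff ℝ ∞ (Function.uncurry f)) (y : G) :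
    ContDiff ℝ ∞ (f · y) :=
  hf.comp (contDiff_prodMk_left y)

lemma contDiff_snd_of_uncurry {f : E → G → F} (hf : ContDiff ℝ ∞ (Function.uncurry f)) (x : E) :
    ContDiff ℝ ∞ (f x) :=
  hf.comp (contDiff_prodMk_right x)

lemma fderiv_comp_prodMk_left {Φ : E × G → F} {x : E} {y : G}
    (hΦ : DifferentiableAt ℝ Φ (x, y)) :
    fderiv ℝ (fun x => Φ (x, y)) x = (fderiv ℝ Φ (x, y)).comp (.inl ℝ E G) :=
  HasFDerivAt.fderiv (f := Φ ∘ (·, y)) (hΦ.hasFDerivAt.comp x (hasFDerivAt_prodMk_left x y))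

lemma fderiv_comp_prodMk_right {Φ : E × G → F} {x : E} {y : G}
    (hΦ : DifferentiableAt ℝ Φ (x, y)) :
    fderiv ℝ (fun y => Φ (x, y)) y = (fderiv ℝ Φ (x, y)).comp (.inr ℝ E G) :=
  HasFDerivAt.fderiv (f := Φ ∘ (x, ·)) (hΦ.hasFDerivAt.comp y (hasFDerivAt_prodMk_right x y))

lemma fderiv_fderiv_comm {f : E → G → F} (hf : ContDiff ℝ ∞ (Function.uncurry f))
    (x : E) (y : G) (v : E) (w : G) :
    fderiv ℝ (fun x => fderiv ℝ (f x) y) x v w = fderiv ℝ (fun y => fderiv ℝ (f · y) x) y w v := by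
  let Φ := Function.uncurry f
  have h_diff : Differentiable ℝ Φ := hf.differentiable (by simp)
  have h_diff' : DifferentiableAt ℝ (fderiv ℝ Φ) (x, y) :=
    (hf.fderiv_right (m := ∞) (by simp)).differentiable (by simp) (x, y)
  have h_snd : (fun x => fderiv ℝ (f x) y) = fun x => (fderiv ℝ Φ (x, y)).comp (.inr ℝ E G) :=
    funext fun x => fderiv_comp_prodMk_right (h_diff (x, y))
  have h_fst : (fun y => fderiv ℝ (f · y) x) = fun y => (fderiv ℝ Φ (x, y)).comp (.inl ℝ E G) :=
    funext fun y => fderiv_comp_prodMk_left (h_diff (x, y))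
  calc
    _ = fderiv ℝ (fun x => (fderiv ℝ Φ (x, y)).comp (.inr ℝ E G)) x v w := by
      rw [h_snd]
    _ = fderiv ℝ (fderiv ℝ Φ) (x, y) (v, 0) (0, w) := by
      rw [fderiv_clm_comp (h_diff'.comp x (differentiableAt_id.prodMk (differentiableAt_const y)))
        (differentiableAt_const _), fderiv_comp_prodMk_left h_diff']
      simp
    _ = fderiv ℝ (fderiv ℝ Φ) (x, y) (0, w) (v, 0) :=
      hf.contDiffAt.isSymmSndFDerivAt (by simpa using ENat.LEInfty.out) (v, 0) (0, w)
    _ = fderiv ℝ (fun y => (fderiv ℝ Φ (x, y)).comp (.inl ℝ E G)) y w v := by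
      rw [fderiv_clm_comp (c := fun y => fderiv ℝ Φ (x, y))
        (h_diff'.comp y ((differentiableAt_const x).prodMk differentiableAt_id))
        (differentiableAt_const _), fderiv_comp_prodMk_right h_diff']
      simp
    _ = _ := by rw [h_fst]

/-- The mixed partial derivative `∂_x^γ ∂_y^α f` of a function of two variables, the derivatives
in `y` being taken first. -/
noncomputable def mixedFDeriv (γ α : ℕ) (f : E → G → F) (x : E) (y : G) :
    E [×γ]→L[ℝ] G [×α]→L[ℝ] F :=
  iteratedFDeriv ℝ γ (fun x => iteratedFDeriv ℝ α (f x) y) x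

lemma differentiable_iteratedFDeriv {f : E → F} (hf : ContDiff ℝ ∞ f) (k : ℕ) :
    Differentiable ℝ (iteratedFDeriv ℝ k f) :=
  hf.differentiable_iteratedFDeriv (by exact_mod_cast ENat.natCast_lt_top k)

lemma fderiv_clm_continuousMultilinear_apply_const_apply {k : ℕ} {c : E → G →L[ℝ] E' [×k]→L[ℝ] F}
    {x : E} (hc : DifferentiableAt ℝ c x) (w : G) (v : Fin k → E') (u : E) :
    fderiv ℝ (fun x => c x w v) x u = fderiv ℝ c x u w v := by
  rw [fderiv_continuousMultilinear_apply_const_apply (hc.clm_apply (differentiableAt_const w)),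
    fderiv_clm_apply hc (differentiableAt_const w)]
  simp

lemma iteratedFDeriv_fderiv_comm_apply {f : E → G → F}
    (hf : ContDiff ℝ ∞ (Function.uncurry f)) (γ : ℕ) (x : E) (y : G) (v : Fin γ → E) (w : G) :
    iteratedFDeriv ℝ γ (fun x => fderiv ℝ (f x) y) x v w =
      fderiv ℝ (fun y => iteratedFDeriv ℝ γ (f · y) x) y w v := by
  have h_fst (k : ℕ) := contDiff_iteratedFDeriv_fst hf k
  have h_diff (k : ℕ) (x : E) : DifferentiableAt ℝ (fun y => iteratedFDeriv ℝ k (f · y) x) y :=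
    (contDiff_snd_of_uncurry (h_fst k) x).differentiable (by simp) y
  induction γ generalizing x with
  | zero =>
    rw [← fderiv_continuousMultilinear_apply_const_apply (h_diff 0 x)]
    rfl
  | succ γ ih =>
    have h_diff_fderiv : DifferentiableAt ℝ (iteratedFDeriv ℝ γ fun x => fderiv ℝ (f x) y) x :=
      differentiable_iteratedFDeriv (contDiff_fst_of_uncurry (contDiff_fderiv_snd hf) y) γ x
    have h_diff_fderiv' :
        DifferentiableAt ℝ (fun x => fderiv ℝ (fun y => iteratedFDeriv ℝ γ (f · y) x) y) x :=
      (contDiff_fst_of_uncurry (contDiff_fderiv_snd (h_fst γ)) y).differentiable (by simp) x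
    calc
      _ = fderiv ℝ (fun x => iteratedFDeriv ℝ γ (fun x => fderiv ℝ (f x) y) x (Fin.tail v) w) x
            (v 0) := by
        rw [iteratedFDeriv_succ_apply_left, fderiv_clm_apply
          (h_diff_fderiv.continuousMultilinear_apply_const _) (differentiableAt_const w),
          fderiv_continuousMultilinear_apply_const h_diff_fderiv]
        simp
      _ = fderiv ℝ (fun x => fderiv ℝ (fun y => iteratedFDeriv ℝ γ (f · y) x) y w (Fin.tail v)) x
            (v 0) := by simp_rw [ih]
      _ = fderiv ℝ (fun x => fderiv ℝ (fun y => iteratedFDeriv ℝ γ (f · y) x) y) x (v 0) w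
            (Fin.tail v) := by
        rw [fderiv_clm_continuousMultilinear_apply_const_apply h_diff_fderiv']
      _ = fderiv ℝ (fun y => fderiv ℝ (fun x => iteratedFDeriv ℝ γ (f · y) x) x) y w (v 0)
            (Fin.tail v) := by rw [fderiv_fderiv_comm (h_fst γ)]
      _ = fderiv ℝ (fun y => fderiv ℝ (fun x => iteratedFDeriv ℝ γ (f · y) x) x (v 0)
            (Fin.tail v)) y w := by
        have h_diff' : DifferentiableAt ℝ
            (fun y => fderiv ℝ (fun x => iteratedFDeriv ℝ γ (f · y) x) x) y :=
          (contDiff_snd_of_uncurry (contDiff_fderiv_fst (h_fst γ)) x).differentiable (by simp) y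
        rw [fderiv_clm_continuousMultilinear_apply_const_apply h_diff']
      _ = _ := fderiv_continuousMultilinear_apply_const_apply (h_diff (γ + 1) x) v w

lemma mixedFDeriv_comm_apply {f : E → G → F} (hf : ContDiff ℝ ∞ (Function.uncurry f)) (γ α : ℕ)
    (x : E) (y : G) (v : Fin γ → E) (w : Fin α → G) :
    mixedFDeriv γ α f x y v w = mixedFDeriv α γ (fun y x => f x y) y x w v := by
  induction α generalizing y with
  | zero =>
    have h_left : mixedFDeriv γ 0 f x y v w = iteratedFDeriv ℝ γ (f · y) x v :=
      congrArg (· v w) ((continuousMultilinearCurryFin0 ℝ G F).symm.toContinuousLinearEquiv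
        |>.iteratedFDeriv_comp_left (f := (f · y)) (x := x) (i := γ))
    rw [h_left]
    rfl
  | succ α ih =>
    have h_snd := contDiff_iteratedFDeriv_snd hf α
    have h_diff : DifferentiableAt ℝ (fun y => mixedFDeriv γ α f x y) y :=
      (contDiff_snd_of_uncurry (contDiff_iteratedFDeriv_fst h_snd γ) x).differentiable (by simp) y
    have h_diff' : DifferentiableAt ℝ (fun y => mixedFDeriv α γ (fun y x => f x y) y x) y :=
      differentiable_iteratedFDeriv
        (contDiff_snd_of_uncurry (contDiff_iteratedFDeriv_fst hf γ) x) α y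
    calc
      _ = iteratedFDeriv ℝ γ (fun x => fderiv ℝ (iteratedFDeriv ℝ α (f x)) y) x v (w 0)
            (Fin.tail w) := by
        have h_curry := ContinuousLinearEquiv.iteratedFDeriv_comp_left (𝕜 := ℝ) (i := γ) (x := x)
          (f := fun x => fderiv ℝ (iteratedFDeriv ℝ α (f x)) y)
          (continuousMultilinearCurryLeftEquiv ℝ (fun _ : Fin (α + 1) => G)
            F).symm.toContinuousLinearEquiv
        exact congrArg (· v w) h_curry
      _ = fderiv ℝ (fun y => mixedFDeriv γ α f x y) y (w 0) v (Fin.tail w) := by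
        rw [iteratedFDeriv_fderiv_comm_apply h_snd]
        rfl
      _ = fderiv ℝ (fun y => mixedFDeriv γ α f x y v (Fin.tail w)) y (w 0) := by
        rw [fderiv_continuousMultilinear_apply_const_apply
          (h_diff.continuousMultilinear_apply_const v),
          fderiv_continuousMultilinear_apply_const_apply h_diff]
      _ = fderiv ℝ (fun y => mixedFDeriv α γ (fun y x => f x y) y x (Fin.tail w) v) y (w 0) := by
        simp_rw [ih]
      _ = fderiv ℝ (fun y => mixedFDeriv α γ (fun y x => f x y) y x) y (w 0) (Fin.tail w) v := by
        rw [fderiv_continuousMultilinear_apply_const_apply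
          (h_diff'.continuousMultilinear_apply_const _),
          fderiv_continuousMultilinear_apply_const_apply h_diff']
      _ = mixedFDeriv (α + 1) γ (fun y x => f x y) y x w v := rfl

lemma norm_mixedFDeriv_le_swap {f : E → G → F} (hf : ContDiff ℝ ∞ (Function.uncurry f))
    (γ α : ℕ) (x : E) (y : G) :
    ‖mixedFDeriv γ α f x y‖ ≤ ‖mixedFDeriv α γ (fun y x => f x y) y x‖ := by
  refine ContinuousMultilinearMap.opNorm_le_bound (by positivity) fun v =>
    ContinuousMultilinearMap.opNorm_le_bound (by positivity) fun w => ?_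
  rw [mixedFDeriv_comm_apply hf]
  calc
    _ ≤ ‖mixedFDeriv α γ (fun y x => f x y) y x w‖ * ∏ i, ‖v i‖ :=
      ContinuousMultilinearMap.le_opNorm _ v
    _ ≤ ‖mixedFDeriv α γ (fun y x => f x y) y x‖ * (∏ i, ‖w i‖) * ∏ i, ‖v i‖ := by
      gcongr
      exact ContinuousMultilinearMap.le_opNorm _ w
    _ = _ := mul_right_comm _ _ _

lemma norm_mixedFDeriv_comm {f : E → G → F} (hf : ContDiff ℝ ∞ (Function.uncurry f)) (γ α : ℕ)
    (x : E) (y : G) :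
    ‖mixedFDeriv γ α f x y‖ = ‖mixedFDeriv α γ (fun y x => f x y) y x‖ :=
  (norm_mixedFDeriv_le_swap hf γ α x y).antisymm
    (norm_mixedFDeriv_le_swap (contDiff_uncurry_swap hf) α γ y x)

lemma norm_mixedFDeriv_comp_left_le {f : E → G → F} (T : F →L[ℝ] F')
    (hf : ContDiff ℝ ∞ (Function.uncurry f)) (γ α : ℕ) (x : E) (y : G) :
    ‖mixedFDeriv γ α (fun x y => T (f x y)) x y‖ ≤ ‖T‖ * ‖mixedFDeriv γ α f x y‖ := by
  have h_inner : (fun x => iteratedFDeriv ℝ α (fun y => T (f x y)) y) =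
      ContinuousLinearMap.compContinuousMultilinearMapL ℝ (fun _ : Fin α => G) F F' T ∘
        fun x => iteratedFDeriv ℝ α (f x) y :=
    funext fun x => T.iteratedFDeriv_comp_left (contDiff_snd_of_uncurry hf x).contDiffAt
      (by exact_mod_cast le_top)
  rw [mixedFDeriv, h_inner]
  refine (ContinuousLinearMap.norm_iteratedFDeriv_comp_left _
    (contDiff_fst_of_uncurry (contDiff_iteratedFDeriv_snd hf α) y).contDiffAt
      (by exact_mod_cast le_top : (γ : ℕ∞ω) ≤ ∞)).trans ?_
  rw [mixedFDeriv]
  gcongr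
  exact ContinuousLinearMap.opNorm_le_bound _ (norm_nonneg T) fun m =>
    T.norm_compContinuousMultilinearMap_le m

lemma norm_mixedFDeriv_linearIsometryEquiv_comp_left {f : E → G → F} (e : F ≃ₗᵢ[ℝ] F')
    (hf : ContDiff ℝ ∞ (Function.uncurry f)) (γ α : ℕ) (x : E) (y : G) :
    ‖mixedFDeriv γ α (fun x y => e (f x y)) x y‖ = ‖mixedFDeriv γ α f x y‖ := by
  refine le_antisymm ?_ ?_
  · refine (norm_mixedFDeriv_comp_left_le (e : F →L[ℝ] F') hf γ α x y).trans
      (mul_le_of_le_one_left (by positivity) ?_)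
    exact e.toLinearIsometry.norm_toContinuousLinearMap_le
  · have h_symm := norm_mixedFDeriv_comp_left_le (e.symm : F' →L[ℝ] F)
      (f := fun x y => e (f x y)) (e.contDiff.comp hf) γ α x y
    simp only [ContinuousLinearEquiv.coe_coe, LinearIsometryEquiv.coe_toContinuousLinearEquiv,
      LinearIsometryEquiv.symm_apply_apply] at h_symm
    refine h_symm.trans (mul_le_of_le_one_left (by positivity) ?_)
    exact e.symm.toLinearIsometry.norm_toContinuousLinearMap_le

end PartialDerivatives

section Leibniz

variable {E F : Type*} [NormedAddCommGroup E] [NormedSpace ℝ E]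
  [NormedAddCommGroup F] [NormedSpace ℝ F]

lemma norm_iteratedFDeriv_smul_le_mul_pow {u : E → ℝ} {f : E → F} (hu : ContDiff ℝ ∞ u)
    (hf : ContDiff ℝ ∞ f) {A B : ℕ → ℝ} {a b t : ℝ} {x : E} {n : ℕ}
    (hA : ∀ i ≤ n, ‖iteratedFDeriv ℝ i u x‖ ≤ A i * (a * t ^ i))
    (hB : ∀ i ≤ n, ‖iteratedFDeriv ℝ i f x‖ ≤ B i * (b * t ^ i)) :
    ‖iteratedFDeriv ℝ n (fun x => u x • f x) x‖ ≤
      (∑ i ∈ Finset.range (n + 1), n.choose i * A i * B (n - i)) * (a * b * t ^ n) := by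
  refine (norm_iteratedFDeriv_smul_le hu hf x (by exact_mod_cast le_top)).trans ?_
  rw [Finset.sum_mul]
  refine Finset.sum_le_sum fun i hi => ?_
  have h_le : i ≤ n := Finset.mem_range_succ_iff.1 hi
  calc
    _ ≤ n.choose i * (A i * (a * t ^ i)) * (B (n - i) * (b * t ^ (n - i))) := by
      have h_nonneg := (norm_nonneg _).trans (hA i h_le)
      gcongr
      exacts [hA i h_le, hB (n - i) (n.sub_le i)]
    _ = n.choose i * A i * B (n - i) * (a * b * (t ^ i * t ^ (n - i))) := by ring
    _ = _ := by rw [pow_mul_pow_sub t h_le]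

end Leibniz

section LocallyUniformlyCompactlySupported

/-- The functions `f p` of the family `f` have compact support, contained in a fixed compact set as
long as the parameter `p` stays close to a given one. This is what makes differentiation under the
integral sign in `p` possible. -/
def LocallyUniformlyCompactlySupported {P Y F : Type*} [TopologicalSpace P] [TopologicalSpace Y]
    [Zero F] (f : P → Y → F) : Prop :=
  ∀ p₀, ∃ K, IsCompact K ∧ ∀ᶠ p in 𝓝 p₀, ∀ y ∉ K, f p y = 0

namespace LocallyUniformlyCompactlySupported

section Topological

variable {P Q Y F F' : Type*} [TopologicalSpace P] [TopologicalSpace Q] [TopologicalSpace Y]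
  [Zero F] [Zero F'] {f : P → Y → F}

lemma mono_germ (hf : LocallyUniformlyCompactlySupported f) {g : P → Y → F'}
    (hg : ∀ p y, (∀ᶠ q in 𝓝 p, f q y = 0) → g p y = 0) :
    LocallyUniformlyCompactlySupported g := fun p₀ => by
  obtain ⟨K, hK, h_zero⟩ := hf p₀
  refine ⟨K, hK, (eventually_eventually_nhds.2 h_zero).mono fun p hp y hy => hg p y ?_⟩
  exact hp.mono fun q hq => hq y hy

lemma comp_continuous (hf : LocallyUniformlyCompactlySupported f) {g : Q → P}
    (hg : Continuous g) : LocallyUniformlyCompactlySupported fun q => f (g q) := fun q₀ =>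
  let ⟨K, hK, h_zero⟩ := hf (g q₀)
  ⟨K, hK, (hg.tendsto q₀).eventually h_zero⟩

lemma hasCompactSupport [R1Space Y] (hf : LocallyUniformlyCompactlySupported f) (p : P) :
    HasCompactSupport (f p) :=
  let ⟨_, hK, h_zero⟩ := hf p
  .intro hK h_zero.self_of_nhds

end Topological

section Derivatives

variable {P E Y F : Type*} [TopologicalSpace P] [NormedAddCommGroup E] [NormedSpace ℝ E]
  [TopologicalSpace Y] [NormedAddCommGroup F] [NormedSpace ℝ F]

lemma smul {u : P → Y → ℝ} (hu : LocallyUniformlyCompactlySupported u) (f : P → Y → F) :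
    LocallyUniformlyCompactlySupported fun p y => u p y • f p y :=
  hu.mono_germ fun p y h => by rw [h.self_of_nhds, zero_smul]

lemma fderiv {f : E → Y → F} (hf : LocallyUniformlyCompactlySupported f) :
    LocallyUniformlyCompactlySupported fun p y => fderiv ℝ (f · y) p :=
  hf.mono_germ fun p y h => by
    rw [EventuallyEq.fderiv_eq (show (f · y) =ᶠ[𝓝 p] 0 from h), fderiv_zero, Pi.zero_apply]

lemma iteratedFDeriv {f : E → Y → F} (hf : LocallyUniformlyCompactlySupported f) (k : ℕ) :
    LocallyUniformlyCompactlySupported fun p y => iteratedFDeriv ℝ k (f · y) p :=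
  hf.mono_germ fun p y h => by
    rw [(EventuallyEq.iteratedFDeriv ℝ (show (f · y) =ᶠ[𝓝 p] 0 from h) k).self_of_nhds,
      iteratedFDeriv_zero, Pi.zero_apply]

end Derivatives

variable {E Y F : Type*} [NormedAddCommGroup E] [NormedSpace ℝ E] [NormedAddCommGroup Y]
  [NormedSpace ℝ Y] [NormedAddCommGroup F] [NormedSpace ℝ F] {f : E → Y → F}
  [MeasurableSpace Y] [BorelSpace Y] (μ : Measure Y) [IsFiniteMeasureOnCompacts μ]

lemma integrable (hf : LocallyUniformlyCompactlySupported f)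
    (hf' : ContDiff ℝ ∞ (Function.uncurry f)) (p : E) : Integrable (f p) μ :=
  (contDiff_snd_of_uncurry hf' p).continuous.integrable_of_hasCompactSupport
    (hf.hasCompactSupport p)

lemma hasFDerivAt_integral (hf : LocallyUniformlyCompactlySupported f)
    (hf' : ContDiff ℝ ∞ (Function.uncurry f)) (p₀ : E) :
    HasFDerivAt (fun p => ∫ y, f p y ∂μ) (∫ y, _root_.fderiv ℝ (f · y) p₀ ∂μ) p₀ := by
  have h_smooth := contDiff_fderiv_fst hf'
  obtain ⟨K, hK, h_zero⟩ := hf.fderiv p₀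
  obtain ⟨C, hC⟩ := hK.exists_bound_of_continuousOn
    (contDiff_snd_of_uncurry h_smooth p₀).continuous.continuousOn
  have h_bound : ∀ᶠ p in 𝓝 p₀, ∀ y ∈ K, ‖_root_.fderiv ℝ (f · y) p‖ < C + 1 :=
    hK.eventually_forall_of_forall_eventually fun y hy =>
      h_smooth.continuous.norm.continuousAt.eventually_lt_const
        ((hC y hy).trans_lt (lt_add_one C))
  refine hasFDerivAt_integral_of_dominated_of_fderiv_le (h_zero.and h_bound)
    (F' := fun p y => _root_.fderiv ℝ (f · y) p) (bound := K.indicator fun _ => C + 1) ?_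
    (hf.integrable μ hf' p₀)
    (hf.fderiv.integrable μ h_smooth p₀).aestronglyMeasurable ?_ ?_ ?_
  · exact .of_forall fun p => (hf.integrable μ hf' p).aestronglyMeasurable
  · refine .of_forall fun y p hp => ?_
    by_cases hy : y ∈ K
    · rw [K.indicator_of_mem hy]
      exact (hp.2 y hy).le
    · rw [K.indicator_of_notMem hy]
      exact (norm_eq_zero.2 (hp.1 y hy)).le
  · exact (integrable_indicator_iff hK.measurableSet).2 (integrableOn_const hK.measure_lt_top.ne)
  · exact .of_forall fun y p _ =>
      ((contDiff_fst_of_uncurry hf' y).differentiable (by simp) p).hasFDerivAt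

lemma iteratedFDeriv_integral (hf : LocallyUniformlyCompactlySupported f)
    (hf' : ContDiff ℝ ∞ (Function.uncurry f)) (k : ℕ) (p : E) :
    _root_.iteratedFDeriv ℝ k (fun p => ∫ y, f p y ∂μ) p =
      ∫ y, _root_.iteratedFDeriv ℝ k (f · y) p ∂μ := by
  induction k generalizing p with
  | zero =>
    exact ((continuousMultilinearCurryFin0 ℝ E F).symm.toContinuousLinearEquiv.integral_comp_comm
      (f p)).symm
  | succ k ih =>
    have h_deriv := (hf.iteratedFDeriv k).hasFDerivAt_integral μ
      (contDiff_iteratedFDeriv_fst hf' k) p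
    rw [iteratedFDeriv_succ_eq_comp_left, Function.comp_apply, funext ih, h_deriv.fderiv]
    have h_curry := ContinuousLinearEquiv.integral_comp_comm (𝕜 := ℝ) (μ := μ)
      (continuousMultilinearCurryLeftEquiv ℝ (fun _ : Fin (k + 1) => E)
        F).symm.toContinuousLinearEquiv
      fun y => _root_.fderiv ℝ (_root_.iteratedFDeriv ℝ k (f · y)) p
    exact h_curry.symm

lemma contDiff_integral (hf : LocallyUniformlyCompactlySupported f)
    (hf' : ContDiff ℝ ∞ (Function.uncurry f)) : ContDiff ℝ ∞ fun p => ∫ y, f p y ∂μ :=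
  contDiff_of_differentiable_iteratedFDeriv fun k _ p => by
    rw [funext (hf.iteratedFDeriv_integral μ hf' k)]
    exact ((hf.iteratedFDeriv k).hasFDerivAt_integral μ
      (contDiff_iteratedFDeriv_fst hf' k) p).differentiableAt

end LocallyUniformlyCompactlySupported

end LocallyUniformlyCompactlySupported

/-- The Japanese bracket `⟨v⟩ = (1 + ‖v‖²)^{1/2}` on an arbitrary normed space. The bracket of a
pair `(ξ, y)` is that of `WithLp.toLp 2 (ξ, y)`, the product `V × W` itself carrying the sup
norm. -/
noncomputable def japaneseBracket {E : Type*} [Norm E] (v : E) : ℝ :=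
  √(1 + ‖v‖ ^ 2)

local notation "⟪" v "⟫" => japaneseBracket v

section Normed

variable {E V W : Type*} [NormedAddCommGroup E] [NormedAddCommGroup V] [NormedAddCommGroup W]

lemma japaneseBracket_sq (v : E) : ⟪v⟫ ^ 2 = 1 + ‖v‖ ^ 2 :=
  Real.sq_sqrt (by positivity)

lemma japaneseBracket_pos (v : E) : 0 < ⟪v⟫ :=
  Real.sqrt_pos.2 (by positivity)

lemma one_le_japaneseBracket (v : E) : 1 ≤ ⟪v⟫ :=
  Real.one_le_sqrt.2 (le_add_of_nonneg_right (by positivity))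

lemma norm_le_japaneseBracket (v : E) : ‖v‖ ≤ ⟪v⟫ :=
  Real.le_sqrt_of_sq_le (le_add_of_nonneg_left zero_le_one)

lemma continuous_japaneseBracket_rpow (s : ℝ) : Continuous fun v : E => ⟪v⟫ ^ s := by
  refine Continuous.rpow_const ?_ fun v => .inl (japaneseBracket_pos v).ne'
  unfold japaneseBracket
  fun_prop

lemma japaneseBracket_rpow (v : E) (s : ℝ) : ⟪v⟫ ^ s = (1 + ‖v‖ ^ 2) ^ (s / 2) := by
  rw [japaneseBracket, Real.sqrt_eq_rpow, ← Real.rpow_mul (by positivity), one_div_mul_eq_div]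

lemma japaneseBracket_rpow_sub_natCast (v : E) (s : ℝ) (k : ℕ) :
    ⟪v⟫ ^ (s - k) = ⟪v⟫ ^ s * ⟪v⟫⁻¹ ^ k := by
  rw [Real.rpow_sub_natCast (japaneseBracket_pos v).ne', inv_pow, div_eq_mul_inv]

lemma japaneseBracket_smul_le [NormedSpace ℝ E] {c : ℝ} (hc : 1 ≤ c) (v : E) :
    ⟪c • v⟫ ≤ c * ⟪v⟫ := by
  have h_sq : 1 ≤ c ^ 2 := one_le_pow₀ hc
  refine Real.sqrt_le_left (by positivity [japaneseBracket_pos v]) |>.2 ?_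
  rw [mul_pow, japaneseBracket_sq, norm_smul, mul_pow, Real.norm_eq_abs, sq_abs]
  linarith

lemma japaneseBracket_le_pair (ξ : V) (y : W) : ⟪ξ⟫ ≤ ⟪WithLp.toLp 2 (ξ, y)⟫ := by
  unfold japaneseBracket
  rw [WithLp.prod_norm_sq_eq_of_L2]
  gcongr
  exact le_add_of_nonneg_right (by positivity)

lemma japaneseBracket_pair_le (ξ : V) (y : W) : ⟪WithLp.toLp 2 (ξ, y)⟫ ≤ ⟪ξ⟫ + ‖y‖ := by
  refine Real.sqrt_le_left (add_nonneg (japaneseBracket_pos ξ).le (norm_nonneg y)) |>.2 ?_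
  rw [WithLp.prod_norm_sq_eq_of_L2, WithLp.toLp_fst, WithLp.toLp_snd, add_sq, japaneseBracket_sq]
  have h_cross : 0 ≤ ⟪ξ⟫ * ‖y‖ := mul_nonneg (japaneseBracket_pos ξ).le (norm_nonneg y)
  linarith

lemma rpow_le_max_mul_rpow {x y c : ℝ} (hx : 0 < x) (hxy : x ≤ y) (hyc : y ≤ c * x) (s : ℝ) :
    y ^ s ≤ max 1 (c ^ s) * x ^ s := by
  have hc : 0 ≤ c := nonneg_of_mul_nonneg_left (hx.le.trans (hxy.trans hyc)) hx
  rcases le_total 0 s with hs | hs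
  · calc
      y ^ s ≤ (c * x) ^ s := by gcongr; exact hx.le.trans hxy
      _ = c ^ s * x ^ s := Real.mul_rpow hc hx.le
      _ ≤ _ := by gcongr; exact le_max_right _ _
  · calc
      y ^ s ≤ 1 * x ^ s := by rw [one_mul]; exact Real.rpow_le_rpow_of_nonpos hx hxy hs
      _ ≤ _ := by gcongr; exact le_max_left _ _

lemma japaneseBracket_pair_rpow_le {R θ : ℝ} (hR : 0 ≤ R) (hθ : θ ≤ 1) {ξ : V} {y : W}
    (hy : ‖y‖ ≤ R * ⟪ξ⟫ ^ θ) (s : ℝ) :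
    ⟪WithLp.toLp 2 (ξ, y)⟫ ^ s ≤ max 1 ((1 + R) ^ s) * ⟪ξ⟫ ^ s := by
  refine rpow_le_max_mul_rpow (japaneseBracket_pos ξ) (japaneseBracket_le_pair ξ y) ?_ s
  have h_rpow : ⟪ξ⟫ ^ θ ≤ ⟪ξ⟫ := by
    simpa using Real.rpow_le_rpow_of_exponent_le (one_le_japaneseBracket ξ) hθ
  calc
    _ ≤ ⟪ξ⟫ + ‖y‖ := japaneseBracket_pair_le ξ y
    _ ≤ ⟪ξ⟫ + R * ⟪ξ⟫ := by gcongr; exact hy.trans (by gcongr)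
    _ = _ := by ring

end Normed

section InnerProduct

variable {E V : Type*} [NormedAddCommGroup E] [NormedSpace ℝ E] [NormedAddCommGroup V]
  [InnerProductSpace ℝ V]

lemma contDiff_japaneseBracket_rpow (s : ℝ) : ContDiff ℝ ∞ fun v : V => ⟪v⟫ ^ s := by
  simp_rw [japaneseBracket_rpow]
  exact (contDiff_const.add (contDiff_norm_sq ℝ)).rpow_const_of_ne fun v => by positivity

lemma fderiv_japaneseBracket_rpow (s : ℝ) (v : V) :
    fderiv ℝ (fun v => ⟪v⟫ ^ s) v = s • ⟪v⟫ ^ (s - 2) • innerSL ℝ v := by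
  simp_rw [japaneseBracket_rpow, sub_div, div_self (two_ne_zero' ℝ)]
  have h_deriv := ((hasStrictFDerivAt_norm_sq v).hasFDerivAt.const_add 1).rpow_const
    (p := s / 2) (.inl (by positivity))
  rw [h_deriv.fderiv, ← Nat.cast_smul_eq_nsmul ℝ, smul_smul, smul_smul]
  congr 1
  push_cast
  ring

lemma norm_iteratedFDeriv_clm_le {F : Type*} [NormedAddCommGroup F] [NormedSpace ℝ F]
    (T : E →L[ℝ] F) (k : ℕ) (v : E) :
    ‖iteratedFDeriv ℝ k T v‖ ≤ ‖T‖ * (⟪v⟫ * ⟪v⟫⁻¹ ^ k) := by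
  have h_pos := japaneseBracket_pos v
  match k with
  | 0 =>
    rw [norm_iteratedFDeriv_zero, pow_zero, mul_one]
    exact T.le_opNorm_of_le (norm_le_japaneseBracket v)
  | 1 =>
    rw [pow_one, mul_inv_cancel₀ h_pos.ne', mul_one, ← norm_iteratedFDeriv_fderiv,
      norm_iteratedFDeriv_zero, T.fderiv]
  | k + 2 =>
    rw [← norm_iteratedFDeriv_fderiv, show fderiv ℝ T = fun _ => T from funext fun v => T.fderiv,
      iteratedFDeriv_succ_const]
    simp only [Pi.zero_apply, norm_zero]
    positivity

lemma exists_norm_iteratedFDeriv_japaneseBracket_rpow_le (k : ℕ) (s : ℝ) :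
    ∃ C, ∀ v : V, ‖iteratedFDeriv ℝ k (fun v => ⟪v⟫ ^ s) v‖ ≤ C * (⟪v⟫ ^ s * ⟪v⟫⁻¹ ^ k) := by
  induction k using Nat.strong_induction_on generalizing s with
  | h k ih =>
    cases k with
    | zero =>
      refine ⟨1, fun v => ?_⟩
      rw [norm_iteratedFDeriv_zero, pow_zero, mul_one, one_mul,
        Real.norm_of_nonneg (Real.rpow_nonneg (japaneseBracket_pos v).le s)]
    | succ k =>
      choose! C hC using fun i hi => ih i hi (s - 2)
      refine ⟨|s| * ∑ i ∈ Finset.range (k + 1), k.choose i * C i * ‖innerSL ℝ (E := V)‖,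
        fun v => ?_⟩
      have h_smooth : ContDiff ℝ ∞ fun v : V => ⟪v⟫ ^ (s - 2) • innerSL ℝ v :=
        (contDiff_japaneseBracket_rpow (s - 2)).smul (innerSL ℝ).contDiff
      have h_leibniz := norm_iteratedFDeriv_smul_le_mul_pow (n := k)
        (contDiff_japaneseBracket_rpow (s - 2)) (innerSL ℝ).contDiff
        (fun i hi => hC i (Nat.lt_succ_of_le hi) v)
        (fun i _ => norm_iteratedFDeriv_clm_le (innerSL ℝ) i v)
      have h_rpow : ⟪v⟫ ^ (s - 2) * ⟪v⟫ * ⟪v⟫⁻¹ ^ k = ⟪v⟫ ^ s * ⟪v⟫⁻¹ ^ (k + 1) := by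
        have h_pos := japaneseBracket_pos v
        rw [show s - 2 = s - (2 : ℕ) by norm_num, japaneseBracket_rpow_sub_natCast]
        simp only [inv_pow]
        field_simp
        exact pow_succ' _ _
      rw [← norm_iteratedFDeriv_fderiv, funext (fderiv_japaneseBracket_rpow s),
        iteratedFDeriv_const_smul_apply' (h_smooth.contDiffAt.of_le (by exact_mod_cast le_top)),
        norm_smul, Real.norm_eq_abs, mul_assoc, ← h_rpow]
      gcongr

end InnerProduct

section Cutoff

variable {V W : Type*} [NormedAddCommGroup V] [NormedAddCommGroup W] [NormedSpace ℝ W]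
  {θ R : ℝ} {ψ : W → ℝ}

/-- The cutoff `ψ(⟨ξ⟩^{-θ} y)`, which localises `y` to the region `‖y‖ ≲ ⟨ξ⟩^θ` when `ψ` has compact
support; for `θ = 1/2` this region is parabolic. -/
noncomputable def dilatedCutoff (θ : ℝ) (ψ : W → ℝ) (ξ : V) (y : W) : ℝ :=
  ψ (⟪ξ⟫ ^ (-θ) • y)

lemma eventually_dilatedCutoff_eq_zero (hR : ∀ z, R ≤ ‖z‖ → ψ z = 0) {ξ : V} {y : W}
    (hy : R * ⟪ξ⟫ ^ θ < ‖y‖) : ∀ᶠ ξ' in 𝓝 ξ, dilatedCutoff θ ψ ξ' y = 0 := by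
  have h_cont : Continuous fun ξ : V => R * ⟪ξ⟫ ^ θ :=
    continuous_const.mul (continuous_japaneseBracket_rpow θ)
  filter_upwards [h_cont.continuousAt.eventually_lt_const hy] with ξ' hξ'
  have h_pos := japaneseBracket_pos ξ'
  refine hR _ ?_
  rw [norm_smul, Real.norm_of_nonneg (by positivity), Real.rpow_neg h_pos.le, ← div_eq_inv_mul]
  exact (le_div_iff₀ (by positivity)).2 hξ'.le

lemma locallyUniformlyCompactlySupported_dilatedCutoff [ProperSpace W] (θ : ℝ)
    (hψ : HasCompactSupport ψ) :
    LocallyUniformlyCompactlySupported (dilatedCutoff θ ψ : V → W → ℝ) := fun ξ₀ => by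
  obtain ⟨R, hR_pos, hR⟩ := hψ.exists_pos_le_norm
  refine ⟨Metric.closedBall 0 (R * (⟪ξ₀⟫ ^ θ + 1)), isCompact_closedBall _ _, ?_⟩
  filter_upwards [(continuous_japaneseBracket_rpow θ).continuousAt.eventually_lt_const
    (lt_add_one (⟪ξ₀⟫ ^ θ))] with ξ hξ y hy
  refine (eventually_dilatedCutoff_eq_zero hR ?_).self_of_nhds
  calc
    R * ⟪ξ⟫ ^ θ ≤ R * (⟪ξ₀⟫ ^ θ + 1) := by gcongr
    _ < ‖y‖ := by simpa using hy

variable [InnerProductSpace ℝ V]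

lemma contDiff_dilatedCutoff (θ : ℝ) (hψ : ContDiff ℝ ∞ ψ) :
    ContDiff ℝ ∞ (Function.uncurry (dilatedCutoff θ ψ : V → W → ℝ)) :=
  hψ.comp (((contDiff_japaneseBracket_rpow (-θ)).comp contDiff_fst).smul contDiff_snd)

lemma exists_norm_iteratedFDeriv_le_of_hasCompactSupport (hψ : ContDiff ℝ ∞ ψ)
    (hψ' : HasCompactSupport ψ) (k : ℕ) : ∃ C, ∀ z, ‖iteratedFDeriv ℝ k ψ z‖ ≤ C :=
  (hψ.continuous_iteratedFDeriv (by exact_mod_cast le_top)).bounded_above_of_compact_support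
    (hψ'.iteratedFDeriv k)

lemma exists_norm_iteratedFDeriv_japaneseBracket_rpow_smul_le (θ R : ℝ) (k : ℕ) :
    ∃ C, ∀ (ξ : V) (y : W), ‖y‖ ≤ R * ⟪ξ⟫ ^ θ →
      ‖iteratedFDeriv ℝ k (fun ξ => ⟪ξ⟫ ^ (-θ) • y) ξ‖ ≤ C * ⟪ξ⟫⁻¹ ^ k := by
  obtain ⟨C, hC⟩ := exists_norm_iteratedFDeriv_japaneseBracket_rpow_le (V := V) k (-θ)
  refine ⟨R * C, fun ξ y hy => ?_⟩
  have h_pos := japaneseBracket_pos ξ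
  calc
    _ ≤ ‖ContinuousLinearMap.toSpanSingleton ℝ y‖ *
          ‖iteratedFDeriv ℝ k (fun ξ : V => ⟪ξ⟫ ^ (-θ)) ξ‖ :=
      ContinuousLinearMap.norm_iteratedFDeriv_comp_left _
        (contDiff_japaneseBracket_rpow (-θ)).contDiffAt (by exact_mod_cast le_top : (k : ℕ∞ω) ≤ ∞)
    _ ≤ R * ⟪ξ⟫ ^ θ * (C * (⟪ξ⟫ ^ (-θ) * ⟪ξ⟫⁻¹ ^ k)) := by
      rw [ContinuousLinearMap.norm_toSpanSingleton]
      gcongr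
      exacts [(norm_nonneg y).trans hy, hC ξ]
    _ = R * C * (⟪ξ⟫ ^ θ * ⟪ξ⟫ ^ (-θ)) * ⟪ξ⟫⁻¹ ^ k := by ring
    _ = R * C * ⟪ξ⟫⁻¹ ^ k := by rw [← Real.rpow_add h_pos, add_neg_cancel, Real.rpow_zero, mul_one]

lemma exists_norm_iteratedFDeriv_dilatedCutoff_le (hψ : ContDiff ℝ ∞ ψ)
    (hψ' : HasCompactSupport ψ) (θ R : ℝ) (k : ℕ) :
    ∃ C, ∀ (ξ : V) (y : W), ‖y‖ ≤ R * ⟪ξ⟫ ^ θ →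
      ‖iteratedFDeriv ℝ k (dilatedCutoff θ ψ · y) ξ‖ ≤ C * ⟪ξ⟫⁻¹ ^ k := by
  choose B hB using exists_norm_iteratedFDeriv_le_of_hasCompactSupport hψ hψ'
  choose D hD using exists_norm_iteratedFDeriv_japaneseBracket_rpow_smul_le (V := V) (W := W) θ R
  obtain ⟨B', hB'⟩ := ((Set.finite_Iic k).image B).bddAbove
  obtain ⟨D', hD'⟩ := ((Set.finite_Iic k).image D).bddAbove
  rw [mem_upperBounds, Set.forall_mem_image] at hB' hD'
  refine ⟨k.factorial * B' * max 1 D' ^ k, fun ξ y hy => ?_⟩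
  have h_pos := japaneseBracket_pos ξ
  have h_outer (i : ℕ) (hi : i ≤ k) (z : W) : ‖iteratedFDeriv ℝ i ψ z‖ ≤ B' :=
    (hB i z).trans (hB' hi)
  have h_inner (i : ℕ) (hi : 1 ≤ i) (hik : i ≤ k) :
      ‖iteratedFDeriv ℝ i (fun ξ => ⟪ξ⟫ ^ (-θ) • y) ξ‖ ≤ (max 1 D' * ⟪ξ⟫⁻¹) ^ i := by
    refine (hD i ξ y hy).trans ?_
    rw [mul_pow]
    gcongr
    calc
      D i ≤ max 1 D' := (hD' hik).trans (le_max_right _ _)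
      _ ≤ max 1 D' ^ i := le_self_pow₀ (le_max_left _ _) (Nat.one_le_iff_ne_zero.1 hi)
  refine (norm_iteratedFDeriv_comp_le hψ
    ((contDiff_japaneseBracket_rpow (-θ)).smul contDiff_const) (by exact_mod_cast le_top) ξ
    (fun i hi => h_outer i hi _) h_inner).trans_eq ?_
  ring

end Cutoff

section Integral

variable {W : Type*} [NormedAddCommGroup W] [NormedSpace ℝ W] [FiniteDimensional ℝ W]
  [MeasurableSpace W] [BorelSpace W] (μ : Measure W) [μ.IsAddHaarMeasure]

lemma exists_locallyIntegrable_japaneseBracket_smul_rpow_le {M : ℝ}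
    (hM : -(Module.finrank ℝ W : ℝ) < M) :
    ∃ h : W → ℝ, LocallyIntegrable h μ ∧
      ∀ L ≥ 1, ∀ᵐ y ∂μ, ⟪L • y⟫ ^ M ≤ L ^ M * h y := by
  rcases le_or_gt 0 M with hM₀ | hM₀
  · refine ⟨fun y => ⟪y⟫ ^ M, (continuous_japaneseBracket_rpow M).locallyIntegrable,
      fun L hL => .of_forall fun y => ?_⟩
    have h_pos := japaneseBracket_pos y
    rw [← Real.mul_rpow (by positivity) h_pos.le]
    gcongr
    exacts [(japaneseBracket_pos _).le, japaneseBracket_smul_le hL y]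
  · have h_finrank : 0 < Module.finrank ℝ W := by
      exact_mod_cast (neg_lt_zero.1 (hM.trans hM₀))
    have := Module.nontrivial_of_finrank_pos h_finrank
    refine ⟨fun y => ‖y‖ ^ M, ?_, fun L hL => ?_⟩
    · refine locallyIntegrable_of_norm_le_rpow (C := 1) (α := -M) h_finrank (neg_lt.1 hM)
        (.of_forall fun y => ?_)
        (by fun_prop : Measurable fun y : W => ‖y‖ ^ M).aestronglyMeasurable
      rw [neg_neg, one_mul, Real.norm_of_nonneg (by positivity)]
    · filter_upwards [μ.ae_ne 0] with y hy
      have h_norm : 0 < ‖y‖ := norm_pos_iff.2 hy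
      rw [← Real.mul_rpow (by positivity) h_norm.le]
      refine Real.rpow_le_rpow_of_nonpos (by positivity) ?_ hM₀.le
      calc
        L * ‖y‖ = ‖L • y‖ := by rw [norm_smul, Real.norm_of_nonneg (by positivity)]
        _ ≤ ⟪L • y⟫ := norm_le_japaneseBracket _

lemma exists_setIntegral_closedBall_japaneseBracket_rpow_le {M : ℝ}
    (hM : -(Module.finrank ℝ W : ℝ) < M) (R : ℝ) :
    ∃ C, ∀ L ≥ 1, ∫ y in Metric.closedBall 0 (R * L), ⟪y⟫ ^ M ∂μ ≤
      C * L ^ (M + Module.finrank ℝ W) := by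
  obtain ⟨h, h_int, h_le⟩ := exists_locallyIntegrable_japaneseBracket_smul_rpow_le μ hM
  refine ⟨∫ y in Metric.closedBall 0 R, h y ∂μ, fun L hL => ?_⟩
  have hL_pos : 0 < L := zero_lt_one.trans_le hL
  have h_scale := μ.setIntegral_comp_smul_of_pos (fun y => ⟪y⟫ ^ M) (Metric.closedBall 0 R) hL_pos
  rw [smul_closedBall' hL_pos.ne', smul_zero, Real.norm_of_nonneg hL_pos.le, mul_comm L R,
    smul_eq_mul, eq_inv_mul_iff_mul_eq₀ (by positivity)] at h_scale
  have h_cont : Continuous fun y : W => ⟪L • y⟫ ^ M :=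
    (continuous_japaneseBracket_rpow M).comp (continuous_const_smul L)
  have h_compact : IsCompact (Metric.closedBall (0 : W) R) := isCompact_closedBall 0 R
  calc
    _ = L ^ Module.finrank ℝ W * ∫ y in Metric.closedBall 0 R, ⟪L • y⟫ ^ M ∂μ := h_scale.symm
    _ ≤ L ^ Module.finrank ℝ W * ∫ y in Metric.closedBall 0 R, L ^ M * h y ∂μ := by
      refine mul_le_mul_of_nonneg_left ?_ (by positivity)
      exact integral_mono_ae (h_cont.continuousOn.integrableOn_compact h_compact)
        ((h_int.integrableOn_isCompact h_compact).const_mul _) (ae_restrict_of_ae (h_le L hL))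
    _ = _ := by
      rw [integral_const_mul, Real.rpow_add hL_pos, Real.rpow_natCast]
      ring

lemma exists_norm_integral_le_of_norm_le_japaneseBracket_rpow {F : Type*} [NormedAddCommGroup F]
    [NormedSpace ℝ F] {M R : ℝ} (hM : -(Module.finrank ℝ W : ℝ) < M) (hR : 0 ≤ R) :
    ∃ I, ∀ (g : W → F) (B : ℝ), ∀ L ≥ 1, (∀ y, ‖y‖ ≤ R * L → ‖g y‖ ≤ B * ⟪y⟫ ^ M) →
      (∀ y, R * L < ‖y‖ → g y = 0) →
      ‖∫ y, g y ∂μ‖ ≤ B * (I * L ^ (M + Module.finrank ℝ W)) := by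
  obtain ⟨I, hI⟩ := exists_setIntegral_closedBall_japaneseBracket_rpow_le μ hM R
  refine ⟨I, fun g B L hL h_inside h_outside => ?_⟩
  have hB : 0 ≤ B := by
    have h_pos := japaneseBracket_pos (0 : W)
    refine nonneg_of_mul_nonneg_left ((norm_nonneg _).trans (h_inside 0 ?_)) (by positivity)
    rw [norm_zero]
    positivity
  let S : Set W := Metric.closedBall 0 (R * L)
  have hS : MeasurableSet S := Metric.isClosed_closedBall.measurableSet
  have h_integrableOn : IntegrableOn (fun y => B * ⟪y⟫ ^ M) S μ :=
    ((continuous_japaneseBracket_rpow M).const_mul B).continuousOn.integrableOn_compact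
      (isCompact_closedBall _ _)
  calc
    _ ≤ ∫ y, S.indicator (fun y => B * ⟪y⟫ ^ M) y ∂μ := by
      refine norm_integral_le_of_norm_le (h_integrableOn.integrable_indicator hS)
        (.of_forall fun y => ?_)
      by_cases hy : y ∈ S
      · rw [S.indicator_of_mem hy]
        exact h_inside y (mem_closedBall_zero_iff.1 hy)
      · rw [S.indicator_of_notMem hy, h_outside y (by simpa [S] using hy), norm_zero]
    _ = B * ∫ y in S, ⟪y⟫ ^ M ∂μ := by rw [integral_indicator hS, integral_const_mul]
    _ ≤ _ := mul_le_mul_of_nonneg_left (hI L hL) hB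

end Integral

section CutoffIntegral

variable {V W F : Type*} [NormedAddCommGroup V] [InnerProductSpace ℝ V] [NormedAddCommGroup W]
  [NormedSpace ℝ W] [NormedAddCommGroup F] [NormedSpace ℝ F] {θ M₁ M₂ : ℝ} {ψ : W → ℝ}

lemma exists_norm_iteratedFDeriv_dilatedCutoff_smul_le {R : ℝ} (hR : 0 ≤ R) (hθ : θ ≤ 1)
    (hψ : ContDiff ℝ ∞ ψ) (hψ' : HasCompactSupport ψ) (α : ℕ) (C : ℕ → ℝ) :
    ∃ A, ∀ f : V → F, ContDiff ℝ ∞ f → ∀ (ξ : V) (y : W),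
      (∀ j ≤ α, ‖iteratedFDeriv ℝ j f ξ‖ ≤
        C j * ⟪WithLp.toLp 2 (ξ, y)⟫ ^ (M₁ - j) * ⟪y⟫ ^ M₂) →
      ‖y‖ ≤ R * ⟪ξ⟫ ^ θ →
      ‖iteratedFDeriv ℝ α (fun ξ => dilatedCutoff θ ψ ξ y • f ξ) ξ‖ ≤
        A * (⟪ξ⟫ ^ (M₁ - α) * ⟪y⟫ ^ M₂) := by
  choose A hA using exists_norm_iteratedFDeriv_dilatedCutoff_le (V := V) hψ hψ' θ R
  let B (j : ℕ) : ℝ := C j * max 1 ((1 + R) ^ (M₁ - j))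
  refine ⟨∑ i ∈ Finset.range (α + 1), α.choose i * A i * B (α - i), fun f hf ξ y h_symbol hy => ?_⟩
  have h_pair (j : ℕ) (hj : j ≤ α) :
      ‖iteratedFDeriv ℝ j f ξ‖ ≤ B j * (⟪ξ⟫ ^ M₁ * ⟪y⟫ ^ M₂ * ⟪ξ⟫⁻¹ ^ j) := by
    have hy_pos := japaneseBracket_pos y
    have h_pos := japaneseBracket_pos (WithLp.toLp 2 (ξ, y))
    have h_nonneg : 0 ≤ C j := by
      refine nonneg_of_mul_nonneg_left ((norm_nonneg _).trans ((h_symbol j hj).trans_eq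
        (mul_assoc _ _ _))) (by positivity)
    calc
      _ ≤ C j * ⟪WithLp.toLp 2 (ξ, y)⟫ ^ (M₁ - j) * ⟪y⟫ ^ M₂ := h_symbol j hj
      _ ≤ C j * (max 1 ((1 + R) ^ (M₁ - j)) * ⟪ξ⟫ ^ (M₁ - j)) * ⟪y⟫ ^ M₂ := by
        gcongr
        exact japaneseBracket_pair_rpow_le hR hθ hy _
      _ = _ := by
        rw [japaneseBracket_rpow_sub_natCast]
        ring
  have h_cutoff : ContDiff ℝ ∞ fun ξ : V => dilatedCutoff θ ψ ξ y :=
    contDiff_fst_of_uncurry (contDiff_dilatedCutoff θ hψ) y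
  refine (norm_iteratedFDeriv_smul_le_mul_pow h_cutoff hf (A := A) (a := 1)
    (fun i _ => by rw [one_mul]; exact hA i ξ y hy) h_pair).trans_eq ?_
  rw [japaneseBracket_rpow_sub_natCast]
  ring

variable [FiniteDimensional ℝ W] [MeasurableSpace W] [BorelSpace W] (μ : Measure W)
  [μ.IsAddHaarMeasure]

lemma exists_norm_iteratedFDeriv_integral_dilatedCutoff_smul_le (hθ₀ : 0 ≤ θ) (hθ₁ : θ ≤ 1)
    (hM₂ : -(Module.finrank ℝ W : ℝ) < M₂) (hψ : ContDiff ℝ ∞ ψ) (hψ' : HasCompactSupport ψ)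
    (α : ℕ) (C : ℕ → ℝ) :
    ∃ C', ∀ f : V → W → F, ContDiff ℝ ∞ (Function.uncurry f) →
      (∀ j ≤ α, ∀ ξ y, ‖iteratedFDeriv ℝ j (f · y) ξ‖ ≤
        C j * ⟪WithLp.toLp 2 (ξ, y)⟫ ^ (M₁ - j) * ⟪y⟫ ^ M₂) →
      ∀ ξ, ‖iteratedFDeriv ℝ α (fun ξ => ∫ y, dilatedCutoff θ ψ ξ y • f ξ y ∂μ) ξ‖ ≤
        C' * ⟪ξ⟫ ^ (M₁ + θ * (M₂ + Module.finrank ℝ W) - α) := by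
  have : ProperSpace W := FiniteDimensional.proper ℝ W
  obtain ⟨R, hR_pos, hR⟩ := hψ'.exists_pos_le_norm
  obtain ⟨A, hA⟩ := exists_norm_iteratedFDeriv_dilatedCutoff_smul_le (V := V) (F := F) (M₁ := M₁)
    (M₂ := M₂) hR_pos.le hθ₁ hψ hψ' α C
  obtain ⟨I, hI⟩ := exists_norm_integral_le_of_norm_le_japaneseBracket_rpow (F := V [×α]→L[ℝ] F) μ
    hM₂ hR_pos.le
  refine ⟨A * I, fun f hf h_symbol ξ => ?_⟩
  have h_pos := japaneseBracket_pos ξ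
  have h_inside (y : W) (hy : ‖y‖ ≤ R * ⟪ξ⟫ ^ θ) :
      ‖iteratedFDeriv ℝ α (fun ξ => dilatedCutoff θ ψ ξ y • f ξ y) ξ‖ ≤
        A * ⟪ξ⟫ ^ (M₁ - α) * ⟪y⟫ ^ M₂ :=
    (hA (f · y) (contDiff_fst_of_uncurry hf y) ξ y (fun j hj => h_symbol j hj ξ y) hy).trans_eq
      (mul_assoc _ _ _).symm
  have h_outside (y : W) (hy : R * ⟪ξ⟫ ^ θ < ‖y‖) :
      iteratedFDeriv ℝ α (fun ξ => dilatedCutoff θ ψ ξ y • f ξ y) ξ = 0 := by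
    have h_zero : (fun ξ => dilatedCutoff θ ψ ξ y • f ξ y) =ᶠ[𝓝 ξ] 0 :=
      (eventually_dilatedCutoff_eq_zero hR hy).mono fun ξ' h => by simp [h]
    rw [(h_zero.iteratedFDeriv ℝ α).self_of_nhds, iteratedFDeriv_zero, Pi.zero_apply]
  have h_support := (locallyUniformlyCompactlySupported_dilatedCutoff (V := V) θ hψ').smul f
  rw [h_support.iteratedFDeriv_integral μ ((contDiff_dilatedCutoff θ hψ).smul hf)]
  calc
    _ ≤ A * ⟪ξ⟫ ^ (M₁ - α) * (I * (⟪ξ⟫ ^ θ) ^ (M₂ + Module.finrank ℝ W)) :=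
      hI _ _ _ (Real.one_le_rpow (one_le_japaneseBracket ξ) hθ₀) h_inside h_outside
    _ = _ := by
      rw [← Real.rpow_mul h_pos.le, mul_mul_mul_comm, ← Real.rpow_add h_pos]
      ring_nf

end CutoffIntegral

section Symbol

variable {X V F : Type*} [NormedAddCommGroup X] [NormedSpace ℝ X] [NormedAddCommGroup V]
  [NormedSpace ℝ V] [NormedAddCommGroup F] [NormedSpace ℝ F]

/-- `b` is a symbol of order `m` in the frequency variable `ξ : V`: each `ξ`-derivative gains
`⟨ξ⟩^{-ρ}`, while `x`-derivatives cost nothing. For `ρ = 1/2` these are the symbols of type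
`(1/2, 1/2)` of the parabolic decomposition. -/
structure IsSymbol (ρ m : ℝ) (b : X → V → F) : Prop where
  contDiff : ContDiff ℝ ∞ (Function.uncurry b)
  bound : ∀ γ α : ℕ, ∃ C, ∀ x ξ, ‖mixedFDeriv γ α b x ξ‖ ≤ C * ⟪ξ⟫ ^ (m - ρ * α)

lemma IsSymbol.mono_type {ρ ρ' m : ℝ} {b : X → V → F} (hb : IsSymbol ρ m b) (hρ : ρ' ≤ ρ) :
    IsSymbol ρ' m b where
  contDiff := hb.contDiff
  bound γ α := by
    obtain ⟨C, hC⟩ := hb.bound γ α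
    refine ⟨C, fun x ξ => (hC x ξ).trans ?_⟩
    have h_pos := japaneseBracket_pos ξ
    have hC_nonneg : 0 ≤ C := by
      refine nonneg_of_mul_nonneg_left ((norm_nonneg (mixedFDeriv γ α b x ξ)).trans (hC x ξ)) ?_
      positivity
    gcongr
    exact one_le_japaneseBracket ξ

end Symbol

section General

variable {X V W F : Type*} [NormedAddCommGroup X] [NormedSpace ℝ X] [NormedAddCommGroup V]
  [InnerProductSpace ℝ V] [NormedAddCommGroup W] [NormedSpace ℝ W] [FiniteDimensional ℝ W]
  [MeasurableSpace W] [BorelSpace W] [NormedAddCommGroup F] [NormedSpace ℝ F] {θ : ℝ}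
  {a : X → V → W → F} {ψ : W → ℝ}

lemma contDiff_uncurry_integral_dilatedCutoff_smul (μ : Measure W) [IsFiniteMeasureOnCompacts μ]
    (ha : ContDiff ℝ ∞ fun p : X × V × W => a p.1 p.2.1 p.2.2) (hψ : ContDiff ℝ ∞ ψ)
    (hψ' : HasCompactSupport ψ) :
    ContDiff ℝ ∞ (Function.uncurry fun x ξ => ∫ y, dilatedCutoff θ ψ ξ y • a x ξ y ∂μ) := by
  have : ProperSpace W := FiniteDimensional.proper ℝ W
  have h_support := ((locallyUniformlyCompactlySupported_dilatedCutoff (V := V) θ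
    hψ').comp_continuous (continuous_snd (X := X))).smul fun p => a p.1 p.2
  have h_cutoff : ContDiff ℝ ∞ fun q : (X × V) × W => dilatedCutoff θ ψ q.1.2 q.2 :=
    (contDiff_dilatedCutoff θ hψ).comp ((contDiff_snd.comp contDiff_fst).prodMk contDiff_snd)
  have h_amplitude : ContDiff ℝ ∞ fun q : (X × V) × W => a q.1.1 q.1.2 q.2 :=
    ha.comp ((contDiff_fst.comp contDiff_fst).prodMk
      ((contDiff_snd.comp contDiff_fst).prodMk contDiff_snd))
  exact h_support.contDiff_integral μ (h_cutoff.smul h_amplitude)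

lemma iteratedFDeriv_integral_dilatedCutoff_smul (μ : Measure W) [IsFiniteMeasureOnCompacts μ]
    (ha : ContDiff ℝ ∞ fun p : X × V × W => a p.1 p.2.1 p.2.2) (hψ : ContDiff ℝ ∞ ψ)
    (hψ' : HasCompactSupport ψ) (γ : ℕ) (x : X) (ξ : V) :
    iteratedFDeriv ℝ γ (fun x => ∫ y, dilatedCutoff θ ψ ξ y • a x ξ y ∂μ) x =
      ∫ y, dilatedCutoff θ ψ ξ y • iteratedFDeriv ℝ γ (a · ξ y) x ∂μ := by
  have : ProperSpace W := FiniteDimensional.proper ℝ W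
  have h_support := ((locallyUniformlyCompactlySupported_dilatedCutoff θ hψ').comp_continuous
    (continuous_const (X := X) (y := ξ))).smul fun x => a x ξ
  have h_cutoff : ContDiff ℝ ∞ fun q : X × W => dilatedCutoff θ ψ ξ q.2 :=
    (contDiff_snd_of_uncurry (contDiff_dilatedCutoff θ hψ) ξ).comp contDiff_snd
  have h_amplitude : ContDiff ℝ ∞ fun q : X × W => a q.1 ξ q.2 :=
    ha.comp (contDiff_fst.prodMk (contDiff_const.prodMk contDiff_snd))
  rw [h_support.iteratedFDeriv_integral μ (h_cutoff.smul h_amplitude)]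
  congr 1 with y : 1
  exact iteratedFDeriv_const_smul_apply'
    ((contDiff_fst_of_uncurry (f := fun x y => a x ξ y) h_amplitude y).contDiffAt.of_le
      (by exact_mod_cast le_top))

theorem stmt14_general (μ : Measure W) [μ.IsAddHaarMeasure] (hθ₀ : 0 ≤ θ) (hθ₁ : θ ≤ 1)
    {M₁ M₂ : ℝ} (hM₂ : -(Module.finrank ℝ W : ℝ) < M₂)
    (ha_smooth : ContDiff ℝ ∞ fun p : X × V × W => a p.1 p.2.1 p.2.2)
    (ha : ∀ γ α : ℕ, ∃ C, ∀ x ξ y, ‖mixedFDeriv γ α (fun x ξ => a x ξ y) x ξ‖ ≤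
      C * ⟪WithLp.toLp 2 (ξ, y)⟫ ^ (M₁ - α) * ⟪y⟫ ^ M₂)
    (hψ : ContDiff ℝ ∞ ψ) (hψ' : HasCompactSupport ψ) :
    IsSymbol 1 (M₁ + θ * (M₂ + Module.finrank ℝ W))
      fun x ξ => ∫ y, dilatedCutoff θ ψ ξ y • a x ξ y ∂μ where
  contDiff := contDiff_uncurry_integral_dilatedCutoff_smul μ ha_smooth hψ hψ'
  bound γ α := by
    choose C hC using ha γ
    obtain ⟨C', hC'⟩ := exists_norm_iteratedFDeriv_integral_dilatedCutoff_smul_le (V := V)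
      (F := X [×γ]→L[ℝ] F) (M₁ := M₁) μ hθ₀ hθ₁ hM₂ hψ hψ' α C
    refine ⟨C', fun x ξ => ?_⟩
    have h_smooth : ContDiff ℝ ∞
        (Function.uncurry fun ξ y => iteratedFDeriv ℝ γ (a · ξ y) x) :=
      contDiff_snd_of_uncurry
        (contDiff_iteratedFDeriv_fst (f := fun x (p : V × W) => a x p.1 p.2) ha_smooth γ) x
    have h_smooth_slice (y : W) : ContDiff ℝ ∞ (Function.uncurry fun x ξ => a x ξ y) :=
      ha_smooth.comp (contDiff_fst.prodMk (contDiff_snd.prodMk contDiff_const))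
    have h_bound := hC' _ h_smooth (fun j _ ξ y =>
      (norm_mixedFDeriv_comm (h_smooth_slice y) γ j x ξ).symm.trans_le (hC j x ξ y)) ξ
    rw [norm_mixedFDeriv_comm (contDiff_uncurry_integral_dilatedCutoff_smul μ ha_smooth hψ hψ'),
      one_mul, mixedFDeriv]
    simpa only [iteratedFDeriv_integral_dilatedCutoff_smul μ ha_smooth hψ hψ'] using h_bound

end General

section Euclidean

lemma jap_eq_japaneseBracket {d : ℕ} (v : EuclideanSpace ℝ (Fin d)) : jap v = ⟪v⟫ :=
  rfl

lemma jap2_eq_japaneseBracket {d e : ℕ} (u : EuclideanSpace ℝ (Fin d))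
    (v : EuclideanSpace ℝ (Fin e)) : jap2 u v = ⟪WithLp.toLp 2 (u, v)⟫ := by
  rw [jap2, japaneseBracket, WithLp.prod_norm_sq_eq_of_L2, WithLp.toLp_fst, WithLp.toLp_snd,
    add_assoc]

lemma exists_norm_mixedFDeriv_le_of_iteratedFDeriv_zero {X F : Type*} [NormedAddCommGroup X]
    [NormedSpace ℝ X] [NormedAddCommGroup F] [NormedSpace ℝ F] {d e : ℕ}
    {a : X → EuclideanSpace ℝ (Fin d) → EuclideanSpace ℝ (Fin e) → F}
    (ha_smooth : ContDiff ℝ ∞ fun p : X × EuclideanSpace ℝ (Fin d) × EuclideanSpace ℝ (Fin e) =>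
      a p.1 p.2.1 p.2.2) {M₁ M₂ : ℝ} {γ α : ℕ}
    (ha : ∃ C, ∀ x ξ y, ‖mixedFDeriv γ α (fun x ξ => iteratedFDeriv ℝ 0 (a x ξ) y) x ξ‖ ≤
      C * jap2 ξ y ^ (M₁ - α) * jap y ^ (M₂ - (0 : ℕ))) :
    ∃ C, ∀ x ξ y, ‖mixedFDeriv γ α (fun x ξ => a x ξ y) x ξ‖ ≤
      C * ⟪WithLp.toLp 2 (ξ, y)⟫ ^ (M₁ - α) * ⟪y⟫ ^ M₂ := by
  obtain ⟨C, hC⟩ := ha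
  refine ⟨C, fun x ξ y => ?_⟩
  have h_smooth_slice : ContDiff ℝ ∞ (Function.uncurry fun x ξ => a x ξ y) :=
    ha_smooth.comp (contDiff_fst.prodMk (contDiff_snd.prodMk contDiff_const))
  have h_bound := hC x ξ y
  rw [Nat.cast_zero, sub_zero, jap2_eq_japaneseBracket, jap_eq_japaneseBracket] at h_bound
  exact (norm_mixedFDeriv_linearIsometryEquiv_comp_left
    (continuousMultilinearCurryFin0 ℝ (EuclideanSpace ℝ (Fin e)) F).symm
    h_smooth_slice γ α x ξ).symm.trans_le h_bound

end Euclidean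

/-- Parabolic decomposition (case `M₂ > −d₂`): integrating a symbol-valued symbol of
order `(M₁,M₂)` over `ξ″` against a cutoff supported where `|ξ″| ≲ ⟨ξ′⟩^{1/2}`
produces a type-`(1/2,1/2)` symbol of order `M₁ + (M₂+d₂)/2` in `ξ′`. -/
theorem stmt14 (n d₁ d₂ : ℕ) (hn : 1 ≤ n) (hd₁ : 1 ≤ d₁) (hd₂ : 1 ≤ d₂)
    (M₁ M₂ : ℝ) (hM₂ : M₂ > -(d₂ : ℝ))
    (a : EuclideanSpace ℝ (Fin n) → EuclideanSpace ℝ (Fin d₁) →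
      EuclideanSpace ℝ (Fin d₂) → ℂ)
    (ha_smooth : ContDiff ℝ (⊤ : ℕ∞)
      (fun p : EuclideanSpace ℝ (Fin n) × EuclideanSpace ℝ (Fin d₁) ×
          EuclideanSpace ℝ (Fin d₂) => a p.1 p.2.1 p.2.2))
    (ha : ∀ γ α β : ℕ, ∃ C : ℝ, ∀ x ξ' ξ'',
      ‖iteratedFDeriv ℝ γ (fun x => iteratedFDeriv ℝ α (fun ξ' =>
          iteratedFDeriv ℝ β (fun ξ'' => a x ξ' ξ'') ξ'') ξ') x‖ ≤
        C * jap2 ξ' ξ'' ^ (M₁ - (α : ℝ)) * jap ξ'' ^ (M₂ - (β : ℝ)))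
    (ψ : EuclideanSpace ℝ (Fin d₂) → ℝ)
    (hψ_smooth : ContDiff ℝ (⊤ : ℕ∞) ψ) (hψ_supp : HasCompactSupport ψ) :
    ∀ γ α : ℕ, ∃ C' : ℝ, ∀ x ξ',
      ‖iteratedFDeriv ℝ γ (fun x => iteratedFDeriv ℝ α (fun ξ' =>
          ∫ ξ'' : EuclideanSpace ℝ (Fin d₂),
            a x ξ' ξ'' * (ψ ((jap ξ' ^ (-(1 / 2) : ℝ)) • ξ'') : ℂ)) ξ') x‖ ≤
        C' * jap ξ' ^ (M₁ + (M₂ + d₂) / 2 - (α : ℝ) / 2) := by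
  have h_type_one := stmt14_general (θ := 1 / 2) volume (by norm_num) (by norm_num)
    (by simpa using hM₂) ha_smooth
    (fun γ α => exists_norm_mixedFDeriv_le_of_iteratedFDeriv_zero ha_smooth (ha γ α 0))
    hψ_smooth hψ_supp
  have h_type_half := h_type_one.mono_type (by norm_num : (1 / 2 : ℝ) ≤ 1)
  simpa only [mixedFDeriv, dilatedCutoff, jap_eq_japaneseBracket, Complex.real_smul, mul_comm,
    finrank_euclideanSpace_fin, mul_one_div] using h_type_half.bound
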